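/- A partition p of 2n is a D-partition (i.e., occurs as the Jordan type of a nilpotent element in so(2n)) if and only if every even part of p occurs with even multiplicity. -/

import Mathlib

open Matrix
/-- A D-partition: every even part occurs with even multiplicity. -/
def IsDPartition {N : ℕ} (p : N.Partition) : Prop :=
  ∀ m ∈ p.parts, Even m → Even (p.parts.count m)

/-- `X` has Jordan type `p`: for each `k ≥ 1`, the number of parts of `p` of size at least `k`
equals `rank X^(k-1) - rank X^k`. -/
def HasJordanType {N : ℕ} (X : Matrix (Fin N) (Fin N) ℂ) (p : N.Partition) : Prop :=
  ∀ k, 1 ≤ k →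
    Multiset.card (p.parts.filter (fun m => k ≤ m)) = (X ^ (k - 1)).rank - (X ^ k).rank

namespace Matrix

section Rank

variable {K ι κ : Type*} [Field K] [Fintype ι] [DecidableEq ι] [Fintype κ] [DecidableEq κ]

/-- Multiplying by invertible matrices on both sides preserves the rank. -/
lemma rank_mul_mul_of_isUnit {V U : Matrix ι ι K} (hV : IsUnit V) (hU : IsUnit U)
    (A : Matrix ι ι K) : (V * A * U).rank = A.rank := by
  rw [rank_mul_eq_left_of_isUnit_det _ _ ((isUnit_iff_isUnit_det U).1 hU),
    rank_mul_eq_right_of_isUnit_det _ _ ((isUnit_iff_isUnit_det V).1 hV)]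

/-- Every square matrix over a field is equivalent to a diagonal matrix. -/
lemma exists_isUnit_mul_mul_eq_diagonal (A : Matrix ι ι K) :
    ∃ (V U : Matrix ι ι K) (w : ι → K), IsUnit V ∧ IsUnit U ∧ V * A * U = diagonal w := by
  obtain ⟨V, U, e, hV, hU, h⟩ := exists_rank_normal_form A
  refine ⟨V, U, Sum.elim 1 0 ∘ e, hV, hU, ?_⟩
  rw [h, ← diagonal_one, ← diagonal_zero, fromBlocks_diagonal, submatrix_diagonal_equiv]
  rfl

/-- The rank of a block diagonal matrix is the sum of the ranks of its blocks. -/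
lemma rank_fromBlocks_diagonal (A : Matrix ι ι K) (D : Matrix κ κ K) :
    (fromBlocks A 0 0 D).rank = A.rank + D.rank := by
  classical
  obtain ⟨V₁, U₁, w₁, hV₁, hU₁, h₁⟩ := exists_isUnit_mul_mul_eq_diagonal A
  obtain ⟨V₂, U₂, w₂, hV₂, hU₂, h₂⟩ := exists_isUnit_mul_mul_eq_diagonal D
  have hV : IsUnit (fromBlocks V₁ 0 0 V₂) := by
    rw [isUnit_iff_isUnit_det] at *
    rw [det_fromBlocks_zero₂₁]
    exact hV₁.mul hV₂
  have hU : IsUnit (fromBlocks U₁ 0 0 U₂) := by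
    rw [isUnit_iff_isUnit_det] at *
    rw [det_fromBlocks_zero₂₁]
    exact hU₁.mul hU₂
  rw [← rank_mul_mul_of_isUnit hV hU, ← rank_mul_mul_of_isUnit hV₁ hU₁ A,
    ← rank_mul_mul_of_isUnit hV₂ hU₂ D, h₁, h₂]
  simp only [fromBlocks_multiply, Matrix.mul_zero, Matrix.zero_mul, add_zero, zero_add, h₁, h₂,
    fromBlocks_diagonal, rank_diagonal]
  rw [← Fintype.card_sum]
  exact Fintype.card_congr Equiv.subtypeSum

/-- A skew-symmetric matrix in characteristic different from two has even rank. -/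
lemma even_rank_of_transpose_eq_neg [NeZero (2 : K)] {A : Matrix ι ι K} (hA : Aᵀ = -A) :
    Even A.rank := by
  obtain ⟨V, U, e, hV, hU, h⟩ := exists_rank_normal_form A
  obtain ⟨U', hU'⟩ := hU.exists_right_inv
  have hU'u : IsUnit U' := IsUnit.of_mul_eq_one_right _ hU'
  set W := (U' * Vᵀ).submatrix e.symm e.symm with hW
  have hWu : IsUnit W.det := by
    rw [hW, det_submatrix_equiv_self, det_mul, det_transpose]
    exact ((isUnit_iff_isUnit_det _).1 hU'u).mul ((isUnit_iff_isUnit_det _).1 hV)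
  have hVA : V * A * Vᵀ = (fromBlocks 1 0 0 0).submatrix e e * (U' * Vᵀ) := by
    rw [← h, Matrix.mul_assoc (V * A) U, ← Matrix.mul_assoc U, hU', Matrix.one_mul]
  have hB : (V * A * Vᵀ).submatrix e.symm e.symm = fromBlocks W.toBlocks₁₁ W.toBlocks₁₂ 0 0 := by
    rw [hVA, ← submatrix_mul_equiv _ _ _ e.symm, ← hW, submatrix_submatrix]
    simp only [Equiv.self_comp_symm, submatrix_id_id]
    conv_lhs => rw [← fromBlocks_toBlocks W]
    rw [fromBlocks_multiply]
    simp
  have hskew : (fromBlocks W.toBlocks₁₁ W.toBlocks₁₂ 0 0 :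
      Matrix (Fin A.rank ⊕ Fin (Fintype.card ι - A.rank)) _ K)ᵀ =
      -fromBlocks W.toBlocks₁₁ W.toBlocks₁₂ 0 0 := by
    rw [← hB, transpose_submatrix, transpose_mul, transpose_mul, transpose_transpose, hA,
      ← Matrix.mul_assoc]
    simp [submatrix_neg]
  rw [fromBlocks_transpose, fromBlocks_neg, fromBlocks_inj] at hskew
  obtain ⟨h₁₁, h₁₂, -, -⟩ := hskew
  have h₁₂ : W.toBlocks₁₂ = 0 := by simpa using h₁₂.symm
  rw [← fromBlocks_toBlocks W, h₁₂, det_fromBlocks_zero₁₂] at hWu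
  have hne : W.toBlocks₁₁.det ≠ 0 := (isUnit_of_mul_isUnit_left hWu).ne_zero
  by_contra hodd
  rw [Nat.not_even_iff_odd] at hodd
  apply hne
  have hdet : W.toBlocks₁₁.det = -W.toBlocks₁₁.det := by
    conv_lhs => rw [← det_transpose, h₁₁, det_neg, Fintype.card_fin, hodd.neg_one_pow]
    ring
  have h2 : (2 : K) * W.toBlocks₁₁.det = 0 := by linear_combination hdet
  exact (mul_eq_zero.1 h2).resolve_left two_ne_zero

/-- Powers of a matrix have decreasing ranks. -/
lemma rank_pow_succ_le (A : Matrix ι ι K) (k : ℕ) : (A ^ (k + 1)).rank ≤ (A ^ k).rank := by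
  rw [pow_succ]
  exact rank_mul_le_left _ _

lemma eq_zero_of_rank_eq_zero {A : Matrix ι ι K} (hA : A.rank = 0) : A = 0 := by
  rw [rank, Submodule.finrank_eq_zero, LinearMap.range_eq_bot] at hA
  ext i j
  simpa using congrFun (LinearMap.congr_fun hA (Pi.single j 1)) i

end Rank

section Shift

/-- The nilpotent Jordan block of size `m`, sending `e i` to `e (i + 1)`. -/
def shift (m : ℕ) : Matrix (Fin m) (Fin m) ℂ :=
  of fun i j => if (i : ℕ) = j + 1 then 1 else 0

lemma shift_pow_apply (m k : ℕ) (i j : Fin m) :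
    (shift m ^ k) i j = if (i : ℕ) = j + k then 1 else 0 := by
  induction k generalizing i j with
  | zero => simp [one_apply, Fin.ext_iff]
  | succ k ih =>
    rw [pow_succ, mul_apply]
    simp only [ih]
    simp only [shift, of_apply, mul_ite, mul_one, mul_zero]
    by_cases h : (i : ℕ) = j + (k + 1)
    · rw [Finset.sum_eq_single ⟨j + 1, by have := i.2; omega⟩]
      · rw [if_pos rfl, if_pos (by simp only; omega), if_pos h]
      · intro b _ hb
        rw [if_neg (fun h' => hb (Fin.ext h'))]
      · simp
    · rw [if_neg h]
      refine Finset.sum_eq_zero fun b _ => ?_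
      split_ifs <;> first | rfl | omega

open scoped ComplexOrder in
lemma rank_shift_pow (m k : ℕ) : (shift m ^ k).rank = m - k := by
  have hdiag : (shift m ^ k)ᴴ * shift m ^ k =
      diagonal fun j : Fin m => if (j : ℕ) + k < m then (1 : ℂ) else 0 := by
    ext i j
    simp only [mul_apply, conjTranspose_apply, shift_pow_apply, diagonal_apply]
    by_cases hij : i = j
    · subst hij
      rw [if_pos rfl]
      split_ifs with h
      · rw [Finset.sum_eq_single ⟨i + k, h⟩]
        · simp
        · intro b _ hb
          rw [if_neg (fun h' => hb (Fin.ext h')), mul_zero]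
        · simp
      · refine Finset.sum_eq_zero fun b _ => ?_
        have := b.2
        rw [if_neg (by omega), mul_zero]
    · rw [if_neg hij]
      refine Finset.sum_eq_zero fun b _ => ?_
      have := Fin.val_ne_of_ne hij
      split_ifs <;> first | omega | simp
  rw [← rank_conjTranspose_mul_self, hdiag, rank_diagonal, ← Fintype.card_fin (m - k)]
  refine Fintype.card_congr ⟨fun i => ⟨i.1, ?_⟩, fun i => ⟨⟨i, ?_⟩, ?_⟩, ?_, ?_⟩
  · have := i.2
    simp only [ne_eq, ite_eq_right_iff, one_ne_zero, imp_false, not_not] at this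
    omega
  · omega
  · have := i.2
    simp only [ne_eq, ite_eq_right_iff, one_ne_zero, imp_false, not_not]
    omega
  · intro i; rfl
  · intro i; rfl

/-- The antidiagonal matrix with alternating signs. -/
def altAntidiagonal (m : ℕ) : Matrix (Fin m) (Fin m) ℂ :=
  of fun i j => if (i : ℕ) + j + 1 = m then (-1) ^ (i : ℕ) else 0

lemma altAntidiagonal_transpose {m : ℕ} (hm : Odd m) :
    (altAntidiagonal m)ᵀ = altAntidiagonal m := by
  ext i j
  simp only [altAntidiagonal, transpose_apply, of_apply]
  obtain ⟨l, hl⟩ := hm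
  split_ifs with h₁ h₂ h₂
  · have : (i : ℕ) + j = 2 * l := by omega
    rw [neg_one_pow_eq_pow_mod_two, neg_one_pow_eq_pow_mod_two (i : ℕ)]
    congr 1
    omega
  · omega
  · omega
  · rfl

lemma altAntidiagonal_mul_self {m : ℕ} (hm : Odd m) :
    altAntidiagonal m * altAntidiagonal m = 1 := by
  ext i j
  simp only [altAntidiagonal, mul_apply, of_apply, one_apply]
  rw [Finset.sum_eq_single ⟨m - 1 - i, by have := i.2; omega⟩]
  · have hi := i.2
    have hj := j.2
    obtain ⟨l, hl⟩ := hm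
    by_cases hij : i = j
    · subst hij
      rw [if_pos rfl, if_pos (by simp only; omega), if_pos (by simp only; omega), ← pow_add]
      exact Even.neg_one_pow ⟨l, by simp only; omega⟩
    · have := Fin.val_ne_of_ne hij
      rw [if_neg hij, if_neg (c := m - 1 - (i : ℕ) + j + 1 = m) (by omega), mul_zero]
  · intro b _ hb
    have : (b : ℕ) ≠ m - 1 - i := fun h => hb (Fin.ext h)
    rw [if_neg (by omega), zero_mul]
  · simp

lemma shift_transpose_mul_altAntidiagonal (m : ℕ) :
    (shift m)ᵀ * altAntidiagonal m = -(altAntidiagonal m * shift m) := by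
  ext i j
  simp only [neg_apply, mul_apply, transpose_apply, shift, altAntidiagonal, of_apply]
  have hi := i.2
  have hj := j.2
  by_cases h : (i : ℕ) + j + 2 = m
  · rw [Finset.sum_eq_single ⟨i + 1, by omega⟩, Finset.sum_eq_single ⟨j + 1, by omega⟩]
    · rw [if_pos rfl, if_pos (by simp only; omega), if_pos (by simp only; omega), if_pos rfl]
      ring
    · intro b _ hb
      rw [if_neg (c := (b : ℕ) = j + 1) (fun h' => hb (Fin.ext h')), mul_zero]
    · simp
    · intro b _ hb
      rw [if_neg (c := (b : ℕ) = i + 1) (fun h' => hb (Fin.ext h')), zero_mul]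
    · simp
  · rw [Finset.sum_eq_zero, Finset.sum_eq_zero, neg_zero]
    · intro b _
      split_ifs <;> first | omega | simp
    · intro b _
      split_ifs <;> first | omega | simp

end Shift

/-- A matrix which is skew-adjoint for a symmetric involutive form is similar to a
skew-symmetric matrix. -/
lemma exists_skew_of_skewAdjoint {ι : Type*} [Fintype ι] [DecidableEq ι] {S N : Matrix ι ι ℂ}
    (hS : Sᵀ = S) (hSS : S * S = 1) (hN : Nᵀ * S = -(S * N)) :
    ∃ X : Matrix ι ι ℂ, Xᵀ = -X ∧ ∀ k, (X ^ k).rank = (N ^ k).rank := by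
  obtain ⟨a, b, hab, hab'⟩ : ∃ a b : ℂ, 2 * (a * b) = 1 ∧ a * a + b * b = 0 := by
    refine ⟨1 / 2 + Complex.I / 2, 1 / 2 - Complex.I / 2, ?_, ?_⟩
    · linear_combination (-1 / 2 : ℂ) * Complex.I_mul_I
    · linear_combination (1 / 2 : ℂ) * Complex.I_mul_I
  have key : ∀ c d e f : ℂ, (c • 1 + d • S) * (e • 1 + f • S) =
      (c * e + d * f) • (1 : Matrix ι ι ℂ) + (c * f + d * e) • S := fun c d e f => by
    simp only [Matrix.add_mul, Matrix.mul_add, smul_mul_smul_comm, Matrix.mul_one,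
      Matrix.one_mul, hSS, add_smul]
    abel
  set P : Matrix ι ι ℂ := a • 1 + b • S with hP
  set Q : Matrix ι ι ℂ := b • 1 + a • S with hQ
  have hPt : Pᵀ = P := by simp [hP, hS]
  have hQt : Qᵀ = Q := by simp [hQ, hS]
  have hPQ : P * Q = 1 := by
    rw [key, show a * b + b * a = 1 by linear_combination hab, hab', zero_smul, one_smul, add_zero]
  have hQP : Q * P = 1 := by
    rw [key, show b * a + a * b = 1 by linear_combination hab, show b * b + a * a = 0 by
      linear_combination hab', zero_smul, one_smul, add_zero]
  have hPP : P * P = S := by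
    rw [key, show a * b + b * a = 1 by linear_combination hab, hab', zero_smul, one_smul, zero_add]
  have hSQ : S * Q = P := by rw [← hPP, Matrix.mul_assoc, hPQ, Matrix.mul_one]
  have hQS : Q * S = P := by rw [← hPP, ← Matrix.mul_assoc, hQP, Matrix.one_mul]
  refine ⟨P * N * Q, ?_, fun k => ?_⟩
  · calc (P * N * Q)ᵀ = Q * Nᵀ * P := by
          rw [transpose_mul, transpose_mul, hPt, hQt, ← Matrix.mul_assoc]
      _ = Q * (Nᵀ * S) * Q := by rw [← hSQ]; simp only [Matrix.mul_assoc]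
      _ = -(Q * S * N * Q) := by rw [hN]; simp [Matrix.mul_assoc]
      _ = -(P * N * Q) := by rw [hQS]
  · have hpow : (P * N * Q) ^ k = P * N ^ k * Q := by
      induction k with
      | zero => simp [hPQ]
      | succ k ih =>
        calc (P * N * Q) ^ (k + 1) = P * N ^ k * (Q * P) * N * Q := by
              rw [pow_succ, ih]; simp only [Matrix.mul_assoc]
          _ = P * N ^ (k + 1) * Q := by
              rw [hQP, Matrix.mul_one, pow_succ]; simp only [Matrix.mul_assoc]
    rw [hpow, rank_mul_mul_of_isUnit (IsUnit.of_mul_eq_one_right _ hQP)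
      (IsUnit.of_mul_eq_one_right _ hPQ)]

end Matrix

/-- A multiset of natural numbers is a skew Jordan type if it is the multiset of sizes of the
Jordan blocks of some nilpotent skew-symmetric complex matrix. -/
def IsSkewJordanType (s : Multiset ℕ) : Prop :=
  ∃ (ι : Type) (_ : Fintype ι) (_ : DecidableEq ι) (X : Matrix ι ι ℂ),
    Xᵀ = -X ∧ ∀ k, (X ^ k).rank = (s.map fun m => m - k).sum

lemma IsSkewJordanType.zero : IsSkewJordanType 0 :=
  ⟨Fin 0, inferInstance, inferInstance, 0, Subsingleton.elim _ _, fun k => by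
    simpa using rank_le_width (_ : Matrix (Fin 0) (Fin 0) ℂ)⟩

lemma IsSkewJordanType.add {s t : Multiset ℕ} (hs : IsSkewJordanType s)
    (ht : IsSkewJordanType t) : IsSkewJordanType (s + t) := by
  obtain ⟨ι, _, _, X, hX, hXr⟩ := hs
  obtain ⟨κ, _, _, Y, hY, hYr⟩ := ht
  refine ⟨ι ⊕ κ, inferInstance, inferInstance, fromBlocks X 0 0 Y, ?_, fun k => ?_⟩
  · simp [fromBlocks_transpose, fromBlocks_neg, hX, hY]
  · rw [fromBlocks_diagonal_pow, rank_fromBlocks_diagonal, hXr, hYr, Multiset.map_add,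
      Multiset.sum_add]

lemma IsSkewJordanType.singleton_of_odd {m : ℕ} (hm : Odd m) : IsSkewJordanType {m} := by
  obtain ⟨X, hX, hXr⟩ := exists_skew_of_skewAdjoint (altAntidiagonal_transpose hm)
    (altAntidiagonal_mul_self hm) (shift_transpose_mul_altAntidiagonal m)
  exact ⟨Fin m, inferInstance, inferInstance, X, hX, fun k => by simp [hXr, rank_shift_pow]⟩

lemma IsSkewJordanType.pair (m : ℕ) : IsSkewJordanType {m, m} := by
  obtain ⟨X, hX, hXr⟩ := exists_skew_of_skewAdjoint
    (S := fromBlocks 0 1 1 0) (N := fromBlocks (shift m) 0 0 (-(shift m)ᵀ))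
    (by simp [fromBlocks_transpose])
    (by simp [fromBlocks_multiply])
    (by simp [fromBlocks_multiply, fromBlocks_transpose, fromBlocks_neg])
  refine ⟨Fin m ⊕ Fin m, inferInstance, inferInstance, X, hX, fun k => ?_⟩
  have hneg : ((-(shift m)ᵀ) ^ k).rank = m - k := by
    rw [neg_pow, ← transpose_pow, rank_mul_eq_right_of_isUnit_det, rank_transpose, rank_shift_pow]
    exact (isUnit_iff_isUnit_det _).1 (isUnit_one.neg.pow k)
  simp [hXr, fromBlocks_diagonal_pow, rank_fromBlocks_diagonal, rank_shift_pow, hneg]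

lemma isSkewJordanType_of_even_count (s : Multiset ℕ)
    (hs : ∀ m ∈ s, Even m → Even (s.count m)) : IsSkewJordanType s := by
  induction s using Multiset.strongInductionOn with
  | ih s ih =>
  obtain rfl | ⟨m, hm⟩ := s.empty_or_exists_mem
  · exact .zero
  obtain ⟨t, rfl⟩ := Multiset.exists_cons_of_mem hm
  rcases Nat.even_or_odd m with hme | hmo
  · have hc := hs m hm hme
    rw [Multiset.count_cons_self] at hc
    have hmt : m ∈ t := by
      rw [← Multiset.count_pos]
      by_contra h0
      simp [show t.count m = 0 by omega] at hc
    obtain ⟨u, rfl⟩ := Multiset.exists_cons_of_mem hmt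
    have hu : IsSkewJordanType u := by
      refine ih u ((Multiset.lt_cons_self u m).trans (Multiset.lt_cons_self _ m))
        fun a ha hae => ?_
      have := hs a (by simp [ha]) hae
      simp only [Multiset.count_cons] at this
      split_ifs at this with h
      · simpa [Nat.even_add_one] using this
      · simpa using this
    simpa [Multiset.insert_eq_cons] using (IsSkewJordanType.pair m).add hu
  · have ht : IsSkewJordanType t := by
      refine ih t (Multiset.lt_cons_self t m) fun a ha hae => ?_
      have := hs a (by simp [ha]) hae
      rwa [Multiset.count_cons_of_ne] at this
      rintro rfl
      exact (Nat.not_even_iff_odd.2 hmo) hae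
    simpa using (IsSkewJordanType.singleton_of_odd hmo).add ht

lemma card_filter_le_add_sum_map_sub (s : Multiset ℕ) {k : ℕ} (hk : 1 ≤ k) :
    Multiset.card (s.filter fun m => k ≤ m) + (s.map fun m => m - k).sum =
      (s.map fun m => m - (k - 1)).sum := by
  induction s using Multiset.induction_on with
  | empty => simp
  | cons a s ih =>
    rw [Multiset.filter_cons, Multiset.card_add, Multiset.map_cons, Multiset.sum_cons,
      Multiset.map_cons, Multiset.sum_cons, ← ih]
    split_ifs
    · rw [Multiset.card_singleton]
      omega
    · rw [Multiset.card_zero]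
      omega

lemma count_add_card_filter_succ_le (s : Multiset ℕ) (m : ℕ) :
    s.count m + Multiset.card (s.filter fun a => m + 1 ≤ a) =
      Multiset.card (s.filter fun a => m ≤ a) := by
  induction s using Multiset.induction_on with
  | empty => simp
  | cons a s ih =>
    rw [Multiset.count_cons, Multiset.filter_cons, Multiset.filter_cons, Multiset.card_add,
      Multiset.card_add, ← ih]
    split_ifs <;> simp only [Multiset.card_singleton, Multiset.card_zero] <;> omega

/-- A partition `p` of `2n` is a D-partition (i.e. occurs as the Jordan type of a
nilpotent element of `so(2n, ℂ)`, the skew-symmetric matrices) if and only if every even part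
of `p` occurs with even multiplicity. -/
theorem jordan_type_so_iff_D_partition (n : ℕ) (p : (2 * n).Partition) :
    (∃ X : Matrix (Fin (2 * n)) (Fin (2 * n)) ℂ,
        Xᵀ = -X ∧ IsNilpotent X ∧ HasJordanType X p) ↔ IsDPartition p := by
  constructor
  · rintro ⟨X, hX, -, hJ⟩ m hm hme
    obtain ⟨j, rfl⟩ : ∃ j, m = j + 1 := ⟨m - 1, by have := p.parts_pos hm; omega⟩
    have hodd : ∀ k, Odd k → Even (X ^ k).rank := fun k hk =>
      even_rank_of_transpose_eq_neg (by rw [transpose_pow, hX, hk.neg_pow])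
    have hj : Even (X ^ j).rank := hodd j (by simpa [Nat.even_add_one] using hme)
    have hj₂ : Even (X ^ (j + 2)).rank := hodd _ hme.add_one
    have h₁ := hJ (j + 1) (by omega)
    have h₂ := hJ (j + 2) (by omega)
    have h₃ := count_add_card_filter_succ_le p.parts (j + 1)
    have h₄ := rank_pow_succ_le X j
    have h₅ := rank_pow_succ_le X (j + 1)
    simp only [Nat.add_sub_cancel, show j + 2 - 1 = j + 1 by omega,
      show j + 1 + 1 = j + 2 by omega] at *
    rw [Nat.even_iff] at *
    omega
  · intro hp
    obtain ⟨ι, _, _, X, hX, hr⟩ := isSkewJordanType_of_even_count p.parts hp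
    have hcard : Fintype.card ι = 2 * n := by
      simpa [p.parts_sum] using hr 0
    let e := Fintype.equivFinOfCardEq hcard
    have hpow : ∀ k, (reindex e e X) ^ k = reindex e e (X ^ k) := fun k =>
      (map_pow (reindexAlgEquiv ℂ ℂ e) X k).symm
    have hrank : ∀ k, ((reindex e e X) ^ k).rank = (p.parts.map fun m => m - k).sum := fun k => by
      rw [hpow, rank_reindex, hr]
    refine ⟨reindex e e X, ?_, ⟨2 * n, ?_⟩, fun k hk => ?_⟩
    · rw [transpose_reindex, hX]
      rfl
    · apply eq_zero_of_rank_eq_zero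
      rw [hrank]
      refine Multiset.sum_eq_zero fun a ha => ?_
      obtain ⟨m, hm, rfl⟩ := Multiset.mem_map.1 ha
      exact Nat.sub_eq_zero_of_le (p.le_of_mem_parts hm)
    · rw [hrank, hrank, ← card_filter_le_add_sum_map_sub p.parts hk, Nat.add_sub_cancel]
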